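/- With the data below, the limit of N(α)/D(α) as α tends to η₁ from the right equals −(η₁ − η₁⁻¹)/ln η₁. -/

import Mathlib

/-- Complete elliptic integral of the first kind:
`K(k) = ∫₀¹ ds/√((1−s²)(1−k²s²))`. -/
noncomputable def ellK (k : ℝ) : ℝ :=
  ∫ s in (0 : ℝ)..1, 1 / Real.sqrt ((1 - s ^ 2) * (1 - k ^ 2 * s ^ 2))

/-- Complete elliptic integral of the third kind:
`Π(m,k) = ∫₀¹ ds/((1−ms²)√((1−s²)(1−k²s²)))`. -/
noncomputable def ellPi (m k : ℝ) : ℝ :=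
  ∫ s in (0 : ℝ)..1, 1 / ((1 - m * s ^ 2) * Real.sqrt ((1 - s ^ 2) * (1 - k ^ 2 * s ^ 2)))

/-- `l(x) = (x−1)/(x+1)`. -/
noncomputable def lpar (x : ℝ) : ℝ := (x - 1) / (x + 1)

/-- `k(α) = l₁/l(α)` (with `l₁ = l(η₁)`). -/
noncomputable def kfun (η₁ α : ℝ) : ℝ := lpar η₁ / lpar α

/-- `ρ_α(s) = √((η₁−s)(s−η₁⁻¹)(α−s)(s−α⁻¹))`. -/
noncomputable def rho (η₁ α s : ℝ) : ℝ :=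
  Real.sqrt ((η₁ - s) * (s - η₁⁻¹) * (α - s) * (s - α⁻¹))

/-- `Q(α) = (∫_{η₁⁻¹}^{η₁} (s²+s⁻²)/ρ_α(s) ds)/(∫_{η₁⁻¹}^{η₁} ds/ρ_α(s))`. -/
noncomputable def Qfun (η₁ α : ℝ) : ℝ :=
  (∫ s in η₁⁻¹..η₁, (s ^ 2 + (s⁻¹) ^ 2) / rho η₁ α s) /
    (∫ s in η₁⁻¹..η₁, 1 / rho η₁ α s)

/-- `D(α) = α + α⁻¹ + 2 − 4Π(l₁², k(α))/K(k(α))`. -/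
noncomputable def Dfun (η₁ α : ℝ) : ℝ :=
  α + α⁻¹ + 2 - 4 * ellPi (lpar η₁ ^ 2) (kfun η₁ α) / ellK (kfun η₁ α)

/-- `N(α) = −α² − α⁻² + ((α + α⁻¹ + η₁ + η₁⁻¹)/2)·D(α) + Q(α)`. -/
noncomputable def Nfun (η₁ α : ℝ) : ℝ :=
  -α ^ 2 - (α⁻¹) ^ 2 + (α + α⁻¹ + η₁ + η₁⁻¹) / 2 * Dfun η₁ α + Qfun η₁ α

/-!
Put `J s = s + s⁻¹` and let `⟨·⟩` be the average on `(η₁⁻¹, η₁)` with respect to `ds / ρ_α(s)`.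
The Möbius substitution `s = (1 + l₁ t) / (1 - l₁ t)` turns `4 Π(l₁², k) / K(k)` into `⟨J⟩ + 2`, so
`D = J α - ⟨J⟩`, and `N` is likewise an average of a polynomial in `J`. Since
`s (J x - J s) = (x - s) (s - x⁻¹)`, the weight degenerates as `α → η₁` in such a way that
`(J η₁ - J s) / ρ_α(s) → 1 / s`, dominated by `1 / s`. Although the total mass `M` of the weight
diverges, `(J α - J η₁) M → 0`, and so
`D M → ∫ ds / s = 2 ln η₁` and `N M → - ∫ (J s / s) ds = -2 (η₁ - η₁⁻¹)`.
-/

open Set Filter Topology MeasureTheory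

section Joukowski

/-- The Joukowski function `s ↦ s + s⁻¹` (without the customary factor `1 / 2`), the variable in
which `ρ_α`, `D` and `N` are algebraic. -/
noncomputable def joukowski (s : ℝ) : ℝ := s + s⁻¹

lemma continuousAt_joukowski {s : ℝ} (hs : s ≠ 0) : ContinuousAt joukowski s :=
  continuousAt_id.add (continuousAt_inv₀ hs)

lemma sq_add_inv_sq {s : ℝ} (hs : s ≠ 0) : s ^ 2 + s⁻¹ ^ 2 = joukowski s ^ 2 - 2 := by
  unfold joukowski
  field_simp
  ring

lemma mul_joukowski_sub {x s : ℝ} (hx : x ≠ 0) (hs : s ≠ 0) :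
    s * (joukowski x - joukowski s) = (x - s) * (s - x⁻¹) := by
  unfold joukowski
  field_simp
  ring

lemma joukowski_lt_joukowski {x s : ℝ} (hx : 0 < x) (hs : s ∈ Ioo x⁻¹ x) :
    joukowski s < joukowski x := by
  have hs₀ : 0 < s := (inv_pos.2 hx).trans hs.1
  have h : 0 < s * (joukowski x - joukowski s) := by
    rw [mul_joukowski_sub hx.ne' hs₀.ne']
    exact mul_pos (sub_pos.2 hs.2) (sub_pos.2 hs.1)
  exact sub_pos.1 (pos_of_mul_pos_right h hs₀.le)

lemma ne_zero_of_mem_uIcc_inv_self {x s : ℝ} (hx : 0 < x) (hs : s ∈ uIcc x⁻¹ x) : s ≠ 0 :=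
  ((lt_min (inv_pos.2 hx) hx).trans_le hs.1).ne'

lemma continuousOn_joukowski {x : ℝ} (hx : 0 < x) : ContinuousOn joukowski (uIcc x⁻¹ x) :=
  fun _ hs => (continuousAt_joukowski (ne_zero_of_mem_uIcc_inv_self hx hs)).continuousWithinAt

lemma inv_lt_self_of_one_lt {x : ℝ} (hx : 1 < x) : x⁻¹ < x :=
  (inv_lt_one_of_one_lt₀ hx).trans hx

lemma joukowski_lt_joukowski_of_one_lt {x y : ℝ} (hx : 1 < x) (hxy : x < y) :
    joukowski x < joukowski y :=
  joukowski_lt_joukowski (by linarith) ⟨(inv_lt_one_of_one_lt₀ (hx.trans hxy)).trans hx, hxy⟩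

end Joukowski

section Cayley

/-- The Möbius map `y ↦ (1 + y) / (1 - y)`, the inverse of `lpar`; `s = cayley (l₁ * t)` is the
substitution relating integrals against `ds / ρ_α(s)` to complete elliptic integrals. -/
noncomputable def cayley (y : ℝ) : ℝ := (1 + y) / (1 - y)

lemma cayley_neg (y : ℝ) : cayley (-y) = (cayley y)⁻¹ := by
  rw [cayley, cayley, inv_div, sub_neg_eq_add, ← sub_eq_add_neg]

lemma cayley_lpar {x : ℝ} (hx : x + 1 ≠ 0) : cayley (lpar x) = x := by
  have h : 1 - (x - 1) / (x + 1) ≠ 0 := by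
    rw [one_sub_div hx]
    exact div_ne_zero (by norm_num) hx
  rw [cayley, lpar, div_eq_iff h]
  field_simp
  ring

lemma joukowski_cayley {y : ℝ} (hy : 1 - y ^ 2 ≠ 0) :
    joukowski (cayley y) = 4 / (1 - y ^ 2) - 2 := by
  have hfac : 1 - y ^ 2 = (1 - y) * (1 + y) := by ring
  rw [hfac] at hy ⊢
  have hy₁ := left_ne_zero_of_mul hy
  have hy₂ := right_ne_zero_of_mul hy
  rw [joukowski, cayley]
  field_simp
  ring

lemma joukowski_cayley_sub {x y : ℝ} (hx : 1 - x ^ 2 ≠ 0) (hy : 1 - y ^ 2 ≠ 0) :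
    joukowski (cayley x) - joukowski (cayley y) =
      4 * (x ^ 2 - y ^ 2) / ((1 - x ^ 2) * (1 - y ^ 2)) := by
  rw [joukowski_cayley hx, joukowski_cayley hy]
  field_simp
  ring

lemma hasDerivAt_cayley {y : ℝ} (hy : 1 - y ≠ 0) :
    HasDerivAt cayley (2 / (1 - y) ^ 2) y := by
  have h := ((hasDerivAt_id y).const_add 1).fun_div ((hasDerivAt_id y).const_sub 1) hy
  refine h.congr_deriv ?_
  simp only [id]
  ring

lemma lpar_pos {x : ℝ} (hx : 1 < x) : 0 < lpar x :=
  div_pos (by linarith) (by linarith)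

lemma lpar_lt_one {x : ℝ} (hx : 1 < x) : lpar x < 1 :=
  (div_lt_one (by linarith)).2 (by linarith)

lemma one_sub_lpar_sq_pos {x : ℝ} (hx : 1 < x) : 0 < 1 - lpar x ^ 2 :=
  sub_pos.2 ((sq_lt_one_iff₀ (lpar_pos hx).le).2 (lpar_lt_one hx))

lemma abs_lpar_mul_lt_one {x t : ℝ} (hx : 1 < x) (ht : t ∈ Icc (-1) 1) : |lpar x * t| < 1 := by
  rw [abs_mul, abs_of_pos (lpar_pos hx)]
  exact (mul_le_of_le_one_right (lpar_pos hx).le (abs_le.2 ht)).trans_lt (lpar_lt_one hx)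

end Cayley

lemma intervalIntegral_neg_self_of_even {f : ℝ → ℝ} (hf : ∀ x, f (-x) = f x) (a : ℝ) :
    ∫ x in -a..a, f x = 2 * ∫ x in 0..a, f x := by
  by_cases h : IntervalIntegrable f volume 0 a
  · have hneg : IntervalIntegrable f volume (-a) 0 := by
      simpa [hf] using ((IntervalIntegrable.iff_comp_neg).1 h).symm
    have hswap : ∫ x in -a..0, f x = ∫ x in 0..a, f x := by
      simpa [hf] using (intervalIntegral.integral_comp_neg (a := 0) (b := a) f).symm
    rw [← intervalIntegral.integral_add_adjacent_intervals hneg h, hswap, two_mul]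
  · have h₀ : (0 : ℝ) ∈ uIcc (-a) a := by
      simpa [mem_uIcc] using le_total 0 a
    have h' : ¬ IntervalIntegrable f volume (-a) a := fun h' =>
      h (h'.mono_set (uIcc_subset_uIcc h₀ right_mem_uIcc))
    rw [intervalIntegral.integral_undef h, intervalIntegral.integral_undef h', mul_zero]

lemma intervalIntegrable_one_div_sqrt_sub_mul_sub {a b : ℝ} (hab : a < b) :
    IntervalIntegrable (fun s => 1 / √((b - s) * (s - a))) volume a b := by
  have hba : 0 < b - a := sub_pos.2 hab
  refine intervalIntegral.intervalIntegrable_deriv_of_nonneg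
    (g := fun s => Real.arcsin ((2 * s - a - b) / (b - a))) (by fun_prop) ?_
    fun s _ => by positivity
  intro s hs
  rw [min_eq_left hab.le, max_eq_right hab.le] at hs
  have hlin : HasDerivAt (fun s : ℝ => (2 * s - a - b) / (b - a)) (2 / (b - a)) s := by
    simpa using ((((hasDerivAt_id s).const_mul 2).sub_const a).sub_const b).div_const (b - a)
  have hlow : -1 < (2 * s - a - b) / (b - a) := by
    rw [lt_div_iff₀ hba]
    linarith [hs.1]
  have hupp : (2 * s - a - b) / (b - a) < 1 := by
    rw [div_lt_one hba]
    linarith [hs.2]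
  refine ((Real.hasDerivAt_arcsin hlow.ne' hupp.ne).comp s hlin).congr_deriv ?_
  have hsq : 1 - ((2 * s - a - b) / (b - a)) ^ 2 = (2 / (b - a)) ^ 2 * ((b - s) * (s - a)) := by
    field_simp
    ring
  rw [hsq, Real.sqrt_mul (sq_nonneg _), Real.sqrt_sq (by positivity)]
  field_simp

section Rho

variable {η α s : ℝ}

lemma rho_self (hs : s ∈ Icc η⁻¹ η) : rho η η s = (η - s) * (s - η⁻¹) := by
  rw [rho, mul_assoc, Real.sqrt_mul_self (mul_nonneg (sub_nonneg.2 hs.2) (sub_nonneg.2 hs.1))]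

lemma rho_eq_sqrt_mul_sqrt (hs : s ∈ Icc η⁻¹ η) :
    rho η α s = √((η - s) * (s - η⁻¹)) * √((α - s) * (s - α⁻¹)) := by
  rw [rho, mul_assoc, Real.sqrt_mul (mul_nonneg (sub_nonneg.2 hs.2) (sub_nonneg.2 hs.1))]

lemma rho_eq_mul_sqrt_joukowski (hη : η ≠ 0) (hα : α ≠ 0) (hs : 0 < s) :
    rho η α s =
      s * √((joukowski η - joukowski s) * (joukowski α - joukowski s)) := by
  rw [rho, mul_assoc, ← mul_joukowski_sub hη hs.ne', ← mul_joukowski_sub hα hs.ne',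
    mul_mul_mul_comm, Real.sqrt_mul (mul_self_nonneg s), Real.sqrt_mul_self hs.le]

lemma mul_sub_le_rho (hη : 0 < η) (hα : η ≤ α) (hs : s ∈ Icc η⁻¹ η) :
    (η - s) * (s - η⁻¹) ≤ rho η α s := by
  rw [← rho_self hs, rho, rho]
  have hinv : α⁻¹ ≤ η⁻¹ := inv_anti₀ hη hα
  have h₁ : 0 ≤ η - s := sub_nonneg.2 hs.2
  have h₂ : 0 ≤ s - η⁻¹ := sub_nonneg.2 hs.1
  have h₃ : 0 ≤ α - s := h₁.trans (sub_le_sub_right hα s)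
  gcongr

lemma rho_pos (hη : 0 < η) (hα : η ≤ α) (hs : s ∈ Ioo η⁻¹ η) : 0 < rho η α s :=
  (mul_pos (sub_pos.2 hs.2) (sub_pos.2 hs.1)).trans_le
    (mul_sub_le_rho hη hα (Ioo_subset_Icc_self hs))

lemma intervalIntegrable_div_rho (hη : 1 < η) (hα : η < α) {g : ℝ → ℝ}
    (hg : ContinuousOn g (Icc η⁻¹ η)) :
    IntervalIntegrable (fun s => g s / rho η α s) volume η⁻¹ η := by
  have hle := (inv_lt_self_of_one_lt hη).le
  have hinv : α⁻¹ < η⁻¹ := inv_strictAnti₀ (by linarith) hα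
  have hcont : ContinuousOn (fun s => g s / √((α - s) * (s - α⁻¹))) (uIcc η⁻¹ η) := by
    rw [uIcc_of_le hle]
    refine hg.div (by fun_prop) fun s hs => (Real.sqrt_pos.2 ?_).ne'
    exact mul_pos (by linarith [hs.2]) (by linarith [hs.1])
  refine ((intervalIntegrable_one_div_sqrt_sub_mul_sub
    (inv_lt_self_of_one_lt hη)).continuousOn_mul hcont).congr fun s hs => ?_
  rw [uIoc_of_le hle] at hs
  simp only [rho_eq_sqrt_mul_sqrt (Ioc_subset_Icc_self hs), div_mul_div_comm, mul_one, mul_comm]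

/-- The total mass of the weight `ds / ρ_α(s)` on `(η₁⁻¹, η₁)`, i.e. the denominator of `Q(α)`. -/
noncomputable def rhoMass (η α : ℝ) : ℝ := ∫ s in η⁻¹..η, 1 / rho η α s

lemma rhoMass_pos (hη : 1 < η) (hα : η < α) : 0 < rhoMass η α :=
  intervalIntegral.intervalIntegral_pos_of_pos_on
    (intervalIntegrable_div_rho hη hα continuousOn_const)
    (fun _ hs => one_div_pos.2 (rho_pos (by linarith) hα.le hs)) (inv_lt_self_of_one_lt hη)

lemma integral_const_sub_div_rho (hη : 1 < η) (hα : η < α) (c : ℝ) {g : ℝ → ℝ}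
    (hg : ContinuousOn g (Icc η⁻¹ η)) :
    ∫ s in η⁻¹..η, (c - g s) / rho η α s =
      c * rhoMass η α - ∫ s in η⁻¹..η, g s / rho η α s := by
  rw [rhoMass, ← intervalIntegral.integral_const_mul, ← intervalIntegral.integral_sub]
  · simp only [mul_one_div, sub_div]
  · exact (intervalIntegrable_div_rho hη hα continuousOn_const).const_mul c
  · exact intervalIntegrable_div_rho hη hα hg

end Rho

section Substitution

variable {η α : ℝ}

lemma rho_cayley (hη : 1 < η) (hα : 1 < α) {y : ℝ} (hy : |y| < 1) :
    rho η α (cayley y) =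
      4 * √((lpar η ^ 2 - y ^ 2) * (lpar α ^ 2 - y ^ 2)) /
        (√((1 - lpar η ^ 2) * (1 - lpar α ^ 2)) * (1 - y) ^ 2) := by
  have hl := one_sub_lpar_sq_pos hη
  have hL := one_sub_lpar_sq_pos hα
  have hy₁ : 0 < 1 - y := sub_pos.2 (abs_lt.1 hy).2
  have hy₂ : 0 < 1 + y := by linarith [(abs_lt.1 hy).1]
  have hy' : 1 - y ^ 2 = (1 - y) * (1 + y) := by ring
  have hpos : 0 < 1 - y ^ 2 := hy' ▸ mul_pos hy₁ hy₂
  have hprod : (joukowski η - joukowski (cayley y)) * (joukowski α - joukowski (cayley y)) =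
      (4 / (1 - y ^ 2)) ^ 2 * ((lpar η ^ 2 - y ^ 2) * (lpar α ^ 2 - y ^ 2)) /
        ((1 - lpar η ^ 2) * (1 - lpar α ^ 2)) := by
    have hJη := joukowski_cayley_sub hl.ne' hpos.ne'
    have hJα := joukowski_cayley_sub hL.ne' hpos.ne'
    rw [cayley_lpar (by linarith)] at hJη hJα
    rw [hJη, hJα]
    field_simp
  have hcayley : 0 < cayley y := div_pos hy₂ hy₁
  rw [rho_eq_mul_sqrt_joukowski (by linarith) (by linarith) hcayley, hprod,
    Real.sqrt_div' _ (by positivity), Real.sqrt_mul (sq_nonneg _), Real.sqrt_sq (by positivity),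
    hy', cayley]
  field_simp

lemma deriv_cayley_div_rho (hη : 1 < η) (hα : 1 < α) {t : ℝ} (ht : t ∈ Icc (-1) 1) :
    2 / (1 - lpar η * t) ^ 2 * lpar η / rho η α (cayley (lpar η * t)) =
      √((1 - lpar η ^ 2) * (1 - lpar α ^ 2)) / (2 * lpar α) /
        √((1 - t ^ 2) * (1 - kfun η α ^ 2 * t ^ 2)) := by
  have hl := lpar_pos hη
  have hL := lpar_pos hα
  have hy := abs_lpar_mul_lt_one hη ht
  have hy₁ : 0 < 1 - lpar η * t := sub_pos.2 (abs_lt.1 hy).2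
  have hprod : (lpar η ^ 2 - (lpar η * t) ^ 2) * (lpar α ^ 2 - (lpar η * t) ^ 2) =
      (lpar η * lpar α) ^ 2 * ((1 - t ^ 2) * (1 - kfun η α ^ 2 * t ^ 2)) := by
    rw [kfun]
    field_simp
  rw [rho_cayley hη hα hy, hprod, Real.sqrt_mul (sq_nonneg _), Real.sqrt_sq (by positivity)]
  field_simp
  norm_num

lemma integral_comp_joukowski_div_rho (hη : 1 < η) (hα : 1 < α) (g : ℝ → ℝ) :
    ∫ s in η⁻¹..η, g (joukowski s) / rho η α s =
      √((1 - lpar η ^ 2) * (1 - lpar α ^ 2)) / lpar α *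
        ∫ t in (0 : ℝ)..1, g (4 / (1 - lpar η ^ 2 * t ^ 2) - 2) /
          √((1 - t ^ 2) * (1 - kfun η α ^ 2 * t ^ 2)) := by
  have hl := lpar_pos hη
  have hderiv : ∀ t ∈ Icc (-1 : ℝ) 1, HasDerivAt (fun t => cayley (lpar η * t))
      (2 / (1 - lpar η * t) ^ 2 * lpar η) t := fun t ht =>
    (hasDerivAt_cayley (sub_pos.2 (abs_lt.1 (abs_lpar_mul_lt_one hη ht)).2).ne').comp t
      (hasDerivAt_const_mul (lpar η))
  have hsubst := intervalIntegral.integral_comp_mul_deriv_of_deriv_nonneg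
    (a := -1) (b := 1) (f := fun t => cayley (lpar η * t))
    (f' := fun t => 2 / (1 - lpar η * t) ^ 2 * lpar η)
    (g := fun s => g (joukowski s) / rho η α s)
    (fun t ht => (hderiv t (by simpa using ht)).continuousAt.continuousWithinAt)
    (fun t ht => hderiv t (Ioo_subset_Icc_self (by simpa using ht)))
    (fun t _ => by positivity)
  rw [mul_neg_one, mul_one, cayley_neg, cayley_lpar (by linarith)] at hsubst
  have heven := intervalIntegral_neg_self_of_even
    (f := fun t => g (4 / (1 - lpar η ^ 2 * t ^ 2) - 2) /
      √((1 - t ^ 2) * (1 - kfun η α ^ 2 * t ^ 2))) (by simp) 1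
  have hscale : √((1 - lpar η ^ 2) * (1 - lpar α ^ 2)) / lpar α =
      √((1 - lpar η ^ 2) * (1 - lpar α ^ 2)) / (2 * lpar α) * 2 := by
    field_simp
  rw [← hsubst, hscale, mul_assoc, ← heven, ← intervalIntegral.integral_const_mul]
  refine intervalIntegral.integral_congr fun t ht => ?_
  rw [uIcc_of_le (by norm_num)] at ht
  have hy : 1 - (lpar η * t) ^ 2 ≠ 0 :=
    (sub_pos.2 ((sq_lt_one_iff_abs_lt_one _).2 (abs_lpar_mul_lt_one hη ht))).ne'
  simp only [Function.comp_apply, joukowski_cayley hy, mul_pow]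
  rw [div_mul_comm, deriv_cayley_div_rho hη hα ht]
  ring

lemma four_mul_ellPi_div_ellK (hη : 1 < η) (hα : 1 < α) :
    4 * ellPi (lpar η ^ 2) (kfun η α) / ellK (kfun η α) =
      (∫ s in η⁻¹..η, (2 + joukowski s) / rho η α s) / rhoMass η α := by
  have hc : √((1 - lpar η ^ 2) * (1 - lpar α ^ 2)) / lpar α ≠ 0 :=
    (div_pos (Real.sqrt_pos.2 (mul_pos (one_sub_lpar_sq_pos hη) (one_sub_lpar_sq_pos hα)))
      (lpar_pos hα)).ne'
  rw [rhoMass, integral_comp_joukowski_div_rho hη hα (2 + ·),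
    integral_comp_joukowski_div_rho hη hα (fun _ => 1), mul_div_mul_left _ _ hc, ellK, ellPi,
    ← intervalIntegral.integral_const_mul]
  simp only [add_sub_cancel, mul_one_div, div_div]

end Substitution

section Averages

variable {η α : ℝ}

lemma Dfun_mul_rhoMass (hη : 1 < η) (hα : η < α) :
    Dfun η α * rhoMass η α = (joukowski α - joukowski η) * rhoMass η α +
      ∫ s in η⁻¹..η, (joukowski η - joukowski s) / rho η α s := by
  have hcont := (continuousOn_joukowski (zero_lt_one.trans hη)).mono Icc_subset_uIcc
  have hsplit := integral_const_sub_div_rho hη hα (2 + joukowski η)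
    (g := fun s => joukowski η - joukowski s) (by fun_prop)
  simp only [add_sub_assoc, sub_sub_cancel] at hsplit
  rw [Dfun, ← joukowski, four_mul_ellPi_div_ellK hη (hη.trans hα), sub_mul,
    div_mul_cancel₀ _ (rhoMass_pos hη hα).ne', hsplit]
  ring

lemma Nfun_mul_rhoMass (hη : 1 < η) (hα : η < α) :
    Nfun η α * rhoMass η α =
      (joukowski α + joukowski η) / 2 * (Dfun η α * rhoMass η α)
        - (joukowski α + joukowski η) * ((joukowski α - joukowski η) * rhoMass η α)
        - ∫ s in η⁻¹..η,
            (joukowski η + joukowski s) * (joukowski η - joukowski s) / rho η α s := by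
  have hcont := (continuousOn_joukowski (zero_lt_one.trans hη)).mono Icc_subset_uIcc
  have hQ : Qfun η α * rhoMass η α = (joukowski η ^ 2 - 2) * rhoMass η α - ∫ s in η⁻¹..η,
      (joukowski η + joukowski s) * (joukowski η - joukowski s) / rho η α s := by
    rw [← integral_const_sub_div_rho hη hα _ (by fun_prop), Qfun, ← rhoMass,
      div_mul_cancel₀ _ (rhoMass_pos hη hα).ne']
    refine intervalIntegral.integral_congr fun s hs => ?_
    simp only [sq_add_inv_sq (ne_zero_of_mem_uIcc_inv_self (zero_lt_one.trans hη) hs)]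
    ring
  have hα₀ : α ≠ 0 := by linarith
  have hNfun : Nfun η α = 2 - joukowski α ^ 2 + (joukowski α + joukowski η) / 2 * Dfun η α +
      Qfun η α := by
    rw [Nfun, show -α ^ 2 - α⁻¹ ^ 2 = -(α ^ 2 + α⁻¹ ^ 2) by ring, sq_add_inv_sq hα₀, joukowski,
      joukowski]
    ring
  rw [hNfun, add_mul, hQ]
  ring

end Averages

section Limit

variable {η : ℝ}

lemma joukowski_sub_mul_rhoMass_le {α : ℝ} (hη : 1 < η) (hα : η < α) :
    (joukowski α - joukowski η) * rhoMass η α ≤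
      √(η * (joukowski α - joukowski η)) * ∫ s in η⁻¹..η, 1 / √((η - s) * (s - η⁻¹)) := by
  have hη₀ : 0 < η := by linarith
  have hα₀ : 0 < α := by linarith
  rw [rhoMass, ← intervalIntegral.integral_const_mul, ← intervalIntegral.integral_const_mul]
  refine intervalIntegral.integral_mono_on_of_le_Ioo (inv_lt_self_of_one_lt hη).le
    ((intervalIntegrable_div_rho hη hα continuousOn_const).const_mul _)
    ((intervalIntegrable_one_div_sqrt_sub_mul_sub (inv_lt_self_of_one_lt hη)).const_mul _)
    fun s hs => ?_
  have hs₀ : 0 < s := (inv_pos.2 hη₀).trans hs.1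
  have hδ : 0 < joukowski α - joukowski η :=
    sub_pos.2 (joukowski_lt_joukowski_of_one_lt hη hα)
  have hgap : joukowski α - joukowski η ≤ η * ((α - s) * (s - α⁻¹)) := by
    have hηs : 1 ≤ η * s := ((inv_lt_iff_one_lt_mul₀' hη₀).1 hs.1).le
    have hJs := joukowski_lt_joukowski hη₀ hs
    rw [← mul_joukowski_sub hα₀.ne' hs₀.ne', ← mul_assoc]
    nlinarith
  have hfar : 0 < (α - s) * (s - α⁻¹) := pos_of_mul_pos_right (hδ.trans_le hgap) hη₀.le
  have hratio : (joukowski α - joukowski η) / √((α - s) * (s - α⁻¹)) ≤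
      √(η * (joukowski α - joukowski η)) := by
    rw [div_le_iff₀ (Real.sqrt_pos.2 hfar), ← Real.sqrt_mul (by positivity)]
    refine Real.le_sqrt_of_sq_le ?_
    nlinarith
  rw [rho_eq_sqrt_mul_sqrt (Ioo_subset_Icc_self hs), mul_one_div, mul_one_div,
    div_mul_eq_div_div_swap]
  gcongr

lemma tendsto_joukowski_sub_mul_rhoMass (hη : 1 < η) :
    Tendsto (fun α => (joukowski α - joukowski η) * rhoMass η α) (𝓝[>] η) (𝓝 0) := by
  have hη₀ : 0 < η := by linarith
  have hcont : ContinuousAt joukowski η := continuousAt_joukowski hη₀.ne'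
  have hupper : Tendsto (fun α => √(η * (joukowski α - joukowski η)) *
      ∫ s in η⁻¹..η, 1 / √((η - s) * (s - η⁻¹))) (𝓝[>] η) (𝓝 0) := by
    have h : ContinuousAt (fun α => √(η * (joukowski α - joukowski η)) *
      ∫ s in η⁻¹..η, 1 / √((η - s) * (s - η⁻¹))) η := by fun_prop
    simpa using h.tendsto.mono_left nhdsWithin_le_nhds
  refine squeeze_zero' ?_ ?_ hupper
  · filter_upwards [self_mem_nhdsWithin] with α (hα : η < α)
    exact mul_nonneg (sub_pos.2 (joukowski_lt_joukowski_of_one_lt hη hα)).le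
      (rhoMass_pos hη hα).le
  · filter_upwards [self_mem_nhdsWithin] with α hα
    exact joukowski_sub_mul_rhoMass_le hη hα

lemma tendsto_joukowski_sub_div_rho {s : ℝ} (hη : 0 < η) (hs : s ∈ Ioo η⁻¹ η) :
    Tendsto (fun α => (joukowski η - joukowski s) / rho η α s) (𝓝[>] η) (𝓝 (1 / s)) := by
  have hs₀ : 0 < s := (inv_pos.2 hη).trans hs.1
  have hρ : ContinuousAt (fun α => rho η α s) η := by
    unfold rho
    fun_prop (disch := exact hη.ne')
  have hρη : rho η η s = s * (joukowski η - joukowski s) := by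
    rw [rho_self (Ioo_subset_Icc_self hs), mul_joukowski_sub hη.ne' hs₀.ne']
  have hlim := (continuousAt_const (y := joukowski η - joukowski s)).div hρ
    (rho_pos hη le_rfl hs).ne'
  have hval : (joukowski η - joukowski s) / rho η η s = 1 / s := by
    rw [hρη, div_mul_cancel_right₀ (sub_pos.2 (joukowski_lt_joukowski hη hs)).ne', one_div]
  exact hval ▸ hlim.tendsto.mono_left nhdsWithin_le_nhds

lemma joukowski_sub_div_rho_le {α s : ℝ} (hη : 0 < η) (hα : η ≤ α) (hs : s ∈ Ioo η⁻¹ η) :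
    (joukowski η - joukowski s) / rho η α s ≤ 1 / s := by
  have hs₀ : 0 < s := (inv_pos.2 hη).trans hs.1
  rw [div_le_div_iff₀ (rho_pos hη hα hs) hs₀, one_mul, mul_comm, mul_joukowski_sub hη.ne' hs₀.ne']
  exact mul_sub_le_rho hη hα (Ioo_subset_Icc_self hs)

lemma tendsto_integral_joukowski_sub_div_rho (hη : 1 < η) {g : ℝ → ℝ}
    (hg : ContinuousOn g (Icc η⁻¹ η)) :
    Tendsto (fun α => ∫ s in η⁻¹..η, g s * (joukowski η - joukowski s) / rho η α s) (𝓝[>] η)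
      (𝓝 (∫ s in η⁻¹..η, g s / s)) := by
  have hη₀ : 0 < η := by linarith
  have hle := (inv_lt_self_of_one_lt hη).le
  have hcont := (continuousOn_joukowski hη₀).mono Icc_subset_uIcc
  have hdom : IntervalIntegrable (fun s => |g s| * (1 / s)) volume η⁻¹ η := by
    refine ContinuousOn.intervalIntegrable_of_Icc hle (hg.abs.mul ?_)
    exact continuousOn_const.div continuousOn_id fun s hs =>
      ne_zero_of_mem_uIcc_inv_self hη₀ (Icc_subset_uIcc hs)
  simp only [intervalIntegral.integral_of_le hle, integral_Ioc_eq_integral_Ioo]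
  refine tendsto_integral_filter_of_dominated_convergence (fun s => |g s| * (1 / s)) ?_ ?_
    ((intervalIntegrable_iff_integrableOn_Ioo_of_le hle).1 hdom) ?_
  · filter_upwards [self_mem_nhdsWithin] with α hα
    exact ((intervalIntegrable_iff_integrableOn_Ioo_of_le hle).1
      (intervalIntegrable_div_rho hη hα (by fun_prop))).aestronglyMeasurable
  · filter_upwards [self_mem_nhdsWithin] with α (hα : η < α)
    refine ae_restrict_of_forall_mem measurableSet_Ioo fun s hs => ?_
    have hpos : 0 ≤ (joukowski η - joukowski s) / rho η α s :=
      div_nonneg (sub_pos.2 (joukowski_lt_joukowski hη₀ hs)).le (rho_pos hη₀ hα.le hs).le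
    rw [mul_div_assoc, norm_mul, Real.norm_eq_abs, Real.norm_of_nonneg hpos]
    exact mul_le_mul_of_nonneg_left (joukowski_sub_div_rho_le hη₀ hα.le hs) (abs_nonneg _)
  · refine ae_restrict_of_forall_mem measurableSet_Ioo fun s hs => ?_
    simpa only [mul_div_assoc, mul_one_div] using
      (tendsto_joukowski_sub_div_rho hη₀ hs).const_mul (g s)

lemma integral_one_div_inv_self (hη : 0 < η) : ∫ s in η⁻¹..η, 1 / s = 2 * Real.log η := by
  rw [integral_one_div_of_pos (inv_pos.2 hη) hη, div_inv_eq_mul, ← sq, Real.log_pow, Nat.cast_ofNat]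

lemma integral_joukowski_div (hη : 0 < η) :
    ∫ s in η⁻¹..η, joukowski s / s = 2 * (η - η⁻¹) := by
  have hne : ∀ s ∈ uIcc η⁻¹ η, s ≠ 0 := fun _ => ne_zero_of_mem_uIcc_inv_self hη
  have hderiv : ∀ s ∈ uIcc η⁻¹ η,
      HasDerivAt (fun s => s - s⁻¹) (joukowski s / s) s := by
    intro s hs
    have hs₀ := hne s hs
    refine ((hasDerivAt_id s).sub (hasDerivAt_inv hs₀)).congr_deriv ?_
    rw [joukowski]
    field_simp
    ring
  have hcont : ContinuousOn (fun s => joukowski s / s) (uIcc η⁻¹ η) :=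
    (continuousOn_joukowski hη).div continuousOn_id hne
  rw [intervalIntegral.integral_eq_sub_of_hasDerivAt hderiv hcont.intervalIntegrable, inv_inv]
  ring

lemma integral_joukowski_add_div (hη : 0 < η) :
    ∫ s in η⁻¹..η, (joukowski η + joukowski s) / s =
      joukowski η * (2 * Real.log η) + 2 * (η - η⁻¹) := by
  have hne : ∀ s ∈ uIcc η⁻¹ η, s ≠ 0 := fun _ => ne_zero_of_mem_uIcc_inv_self hη
  rw [← integral_one_div_inv_self hη, ← integral_joukowski_div hη,
    ← intervalIntegral.integral_const_mul, ← intervalIntegral.integral_add]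
  · simp only [add_div, mul_one_div]
  · exact ((continuousOn_const.div continuousOn_id hne).intervalIntegrable).const_mul _
  · exact ((continuousOn_joukowski hη).div continuousOn_id hne).intervalIntegrable

lemma tendsto_Dfun_mul_rhoMass (hη : 1 < η) :
    Tendsto (fun α => Dfun η α * rhoMass η α) (𝓝[>] η) (𝓝 (2 * Real.log η)) := by
  have hint := tendsto_integral_joukowski_sub_div_rho hη (g := fun _ => 1) continuousOn_const
  simp only [one_mul, integral_one_div_inv_self (zero_lt_one.trans hη)] at hint
  have hlim := (tendsto_joukowski_sub_mul_rhoMass hη).add hint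
  rw [zero_add] at hlim
  refine hlim.congr' ?_
  filter_upwards [self_mem_nhdsWithin] with α hα
  exact (Dfun_mul_rhoMass hη hα).symm

lemma tendsto_Nfun_mul_rhoMass (hη : 1 < η) :
    Tendsto (fun α => Nfun η α * rhoMass η α) (𝓝[>] η) (𝓝 (-(2 * (η - η⁻¹)))) := by
  have hη₀ : 0 < η := by linarith
  have hcont := (continuousOn_joukowski (zero_lt_one.trans hη)).mono Icc_subset_uIcc
  have hint := tendsto_integral_joukowski_sub_div_rho hη
    (g := fun s => joukowski η + joukowski s) (by fun_prop)
  rw [integral_joukowski_add_div hη₀] at hint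
  have hsum : Tendsto (fun α => joukowski α + joukowski η) (𝓝[>] η)
      (𝓝 (joukowski η + joukowski η)) :=
    ((continuousAt_joukowski hη₀.ne').add_const _).tendsto.mono_left nhdsWithin_le_nhds
  have hlim := (((hsum.div_const 2).mul (tendsto_Dfun_mul_rhoMass hη)).sub
    (hsum.mul (tendsto_joukowski_sub_mul_rhoMass hη))).sub hint
  have hval : (joukowski η + joukowski η) / 2 * (2 * Real.log η) -
      (joukowski η + joukowski η) * 0 - (joukowski η * (2 * Real.log η) + 2 * (η - η⁻¹)) =
      -(2 * (η - η⁻¹)) := by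
    ring
  rw [hval] at hlim
  refine hlim.congr' ?_
  filter_upwards [self_mem_nhdsWithin] with α hα
  exact (Nfun_mul_rhoMass hη hα).symm

end Limit

/- STATEMENT 18: Fix 1 < η₁ < η₂.  The limit of N(α)/D(α) as α tends to η₁ from
the right equals −(η₁ − η₁⁻¹)/ln η₁. -/
theorem stmt18 (η₁ η₂ : ℝ) (h1 : 1 < η₁) (h2 : η₁ < η₂) :
    Filter.Tendsto (fun α => Nfun η₁ α / Dfun η₁ α)
      (nhdsWithin η₁ (Set.Ioi η₁))
      (nhds (-(η₁ - η₁⁻¹) / Real.log η₁)) := by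
  have hlog : 2 * Real.log η₁ ≠ 0 := mul_ne_zero two_ne_zero (Real.log_pos h1).ne'
  have hlim := (tendsto_Nfun_mul_rhoMass h1).div (tendsto_Dfun_mul_rhoMass h1) hlog
  rw [← mul_neg, mul_div_mul_left _ _ two_ne_zero] at hlim
  refine hlim.congr' ?_
  filter_upwards [self_mem_nhdsWithin] with α hα
  exact mul_div_mul_right _ _ (rhoMass_pos h1 hα).ne'
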